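/- Let (B_n) be the Padovan sequence defined by B_0=0, B_1=B_2=1 and B_n = B_{n-2} + B_{n-3} for n ≥ 3. Then a prime p divides B_{p-1} if and only if there exist integers X, Y with X ≠ 0 and p = X^2 + 23Y^2. -/

import Mathlib

/-!
Let `α`, `β`, `γ` be the roots of `x³ - x - 1`, of discriminant `-23`, over the algebraic closure of
`𝔽_p`. Binet's formula shows that `p ∣ B (p - 1)` if and only if the Frobenius endomorphism fixes
all three roots. It permutes them evenly exactly when `-23` is a square modulo `p`, and then
reduction of the binary quadratic forms of discriminant `-23` represents `p` or `2 p` as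
`u² + u v + 6 v²`. Whether it then fixes the roots is read off the cubes of their Lagrange
resolvents, that is, off the cubic residue character modulo `p` of an Eisenstein integer
`resolventInt u v`. By cubic reciprocity, obtained from Gauss and Jacobi sums, this is the cubic
residue character of `p` modulo `resolventInt u v`. There the represented number, `p` or `2 p`, is
a cubic residue, but `2` is not one when `2 p` is represented; so the roots are fixed exactly when
`p = u² + u v + 6 v²`, that is, `p = X² + 23 Y²`.
-/

open scoped QuadraticAlgebra

/-- The Eisenstein integers `ℤ[ω]`, where `ω² = -1 - ω`; the element `⟨a, b⟩` is `a + b ω`. -/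
abbrev EisensteinInt : Type := QuadraticAlgebra ℤ (-1) (-1)

namespace EisensteinInt

lemma norm_eq (z : EisensteinInt) : z.norm = z.re ^ 2 - z.re * z.im + z.im ^ 2 := by
  rw [QuadraticAlgebra.norm_def]; ring

lemma norm_nonneg (z : EisensteinInt) : 0 ≤ z.norm := by
  rw [norm_eq]; nlinarith [sq_nonneg (2 * z.re - z.im), sq_nonneg z.im]

lemma norm_eq_zero_iff {z : EisensteinInt} : z.norm = 0 ↔ z = 0 := by
  refine ⟨fun h ↦ ?_, fun h ↦ by rw [h, QuadraticAlgebra.norm_zero]⟩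
  rw [norm_eq] at h
  have him : z.im = 0 := by
    by_contra hne
    nlinarith [sq_nonneg (2 * z.re - z.im), sq_pos_of_ne_zero hne]
  have hre : z.re = 0 := by simpa [him] using h
  exact QuadraticAlgebra.ext hre him

lemma norm_pos {z : EisensteinInt} (hz : z ≠ 0) : 0 < z.norm :=
  (norm_nonneg z).lt_of_ne' (mt norm_eq_zero_iff.1 hz)

lemma coe_norm (z : EisensteinInt) : (z.norm : EisensteinInt) = z * star z := by
  rw [← QuadraticAlgebra.algebraMap_norm_eq_mul_star, eq_intCast]

lemma coe_trace (z : EisensteinInt) : (z.trace : EisensteinInt) = z + star z := by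
  rw [← QuadraticAlgebra.algebraMap_trace_eq_add_star, eq_intCast]

instance : NoZeroDivisors EisensteinInt where
  eq_zero_or_eq_zero_of_mul_eq_zero {x y} h := by
    simpa only [← norm_eq_zero_iff, map_mul, mul_eq_zero] using h

instance : IsDomain EisensteinInt := NoZeroDivisors.to_isDomain _

instance : Div EisensteinInt where
  div x y :=
    ⟨(2 * (x * star y).re + y.norm) / (2 * y.norm), (2 * (x * star y).im + y.norm) / (2 * y.norm)⟩

lemma div_def (x y : EisensteinInt) :
    x / y = ⟨(2 * (x * star y).re + y.norm) / (2 * y.norm),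
      (2 * (x * star y).im + y.norm) / (2 * y.norm)⟩ :=
  rfl

lemma abs_two_mul_sub_mul_round_le (a : ℤ) {n : ℤ} (hn : 0 < n) :
    |2 * (a - n * ((2 * a + n) / (2 * n)))| ≤ n := by
  have h1 := Int.mul_ediv_self_le (x := 2 * a + n) (k := 2 * n) (by omega)
  have h2 := Int.lt_mul_ediv_self_add (x := 2 * a + n) (k := 2 * n) (by omega)
  exact abs_le.2 ⟨by linarith, by linarith⟩

lemma norm_sub_mul_div_lt (x : EisensteinInt) {y : EisensteinInt} (hy : y ≠ 0) :
    (x - y * (x / y)).norm < y.norm := by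
  have hn := norm_pos hy
  set u := x * star y - y.norm * (x / y) with hu
  have hre : |2 * u.re| ≤ y.norm := by
    simpa [hu, div_def] using abs_two_mul_sub_mul_round_le (x * star y).re hn
  have him : |2 * u.im| ≤ y.norm := by
    simpa [hu, div_def] using abs_two_mul_sub_mul_round_le (x * star y).im hn
  have hmul : (x - y * (x / y)).norm * y.norm = u.norm := by
    rw [← QuadraticAlgebra.norm_star y, ← map_mul, hu, coe_norm]
    ring_nf
  have hbound : 4 * u.norm ≤ 3 * y.norm ^ 2 := by
    rw [norm_eq]
    obtain ⟨h1, h2⟩ := abs_le.1 hre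
    obtain ⟨h3, h4⟩ := abs_le.1 him
    nlinarith [sq_nonneg (u.re + u.im)]
  nlinarith

instance : EuclideanDomain EisensteinInt where
  quotient := (· / ·)
  quotient_zero x := by ext <;> simp [div_def]
  remainder x y := x - y * (x / y)
  quotient_mul_add_remainder_eq x y := by ring
  r := InvImage (· < ·) fun z ↦ z.norm.natAbs
  r_wellFounded := (measure fun z : EisensteinInt ↦ z.norm.natAbs).wf
  remainder_lt x y hy :=
    Int.natAbs_lt_natAbs_of_nonneg_of_lt (norm_nonneg _) (norm_sub_mul_div_lt x hy)
  mul_left_not_lt x y hy := by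
    refine not_lt_of_ge ?_
    simp only [map_mul, Int.natAbs_mul]
    exact Nat.le_mul_of_pos_right _ (Int.natAbs_pos.2 (norm_pos hy).ne')

lemma omega_sq_add_omega_add_one : (ω : EisensteinInt) ^ 2 + ω + 1 = 0 := by
  rw [pow_two, QuadraticAlgebra.omega_mul_omega_eq_mk]
  ext <;> simp

lemma isPrimitiveRoot_omega : IsPrimitiveRoot (ω : EisensteinInt) 3 := by
  refine IsPrimitiveRoot.iff_orderOf.2 (orderOf_eq_prime ?_ fun h ↦ ?_)
  · linear_combination ((ω : EisensteinInt) - 1) * omega_sq_add_omega_add_one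
  · simpa using congrArg QuadraticAlgebra.im h

lemma mul_star_self_eq_one_of_pow_three {z : EisensteinInt} (hz : z ^ 3 = 1) :
    z * star z = 1 := by
  have h : z.norm ^ 3 = 1 := by rw [← map_pow, hz, map_one]
  rw [← coe_norm, (pow_eq_one_iff_of_nonneg (norm_nonneg z) three_ne_zero).1 h, Int.cast_one]

lemma intCast_dvd_iff {n : ℤ} {z : EisensteinInt} :
    (n : EisensteinInt) ∣ z ↔ n ∣ z.re ∧ n ∣ z.im := by
  rw [← QuadraticAlgebra.algebraMap_dvd_iff, eq_intCast]

lemma isUnit_iff_norm_eq_one {z : EisensteinInt} : IsUnit z ↔ z.norm = 1 := by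
  rw [QuadraticAlgebra.isUnit_iff_norm_isUnit, Int.isUnit_iff]
  have := norm_nonneg z
  omega

lemma eq_one_or_sq_add_self_add_one_eq_zero {z : EisensteinInt} (hz : z ^ 3 = 1) :
    z = 1 ∨ z ^ 2 + z + 1 = 0 := by
  have hfactor : (z - 1) * (z ^ 2 + z + 1) = 0 := by linear_combination hz
  exact (mul_eq_zero.1 hfactor).imp_left sub_eq_zero.1

lemma eq_one_of_pow_three_of_dvd_sub_one {z n : EisensteinInt} (hz : z ^ 3 = 1)
    (hn : ¬ n ∣ (3 : EisensteinInt)) (h : n ∣ z - 1) : z = 1 := by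
  refine (eq_one_or_sq_add_self_add_one_eq_zero hz).resolve_right fun h1 ↦ hn ?_
  have h3 : (3 : EisensteinInt) = (z - 1) * -(z + 2) := by linear_combination h1
  exact h3 ▸ h.mul_right _

lemma eq_one_of_pow_three_of_map_eq_one {R : Type*} [CommRing R] {f : EisensteinInt →+* R}
    (h3 : (3 : R) ≠ 0) {z : EisensteinInt} (hz : z ^ 3 = 1) (h : f z = 1) : z = 1 := by
  refine (eq_one_or_sq_add_self_add_one_eq_zero hz).resolve_right fun h1 ↦ h3 ?_
  have hf := congrArg f h1
  rw [map_add, map_add, map_pow, h, map_one, map_zero] at hf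
  linear_combination hf

lemma natCast_dvd_natCast_iff {q n : ℕ} : (q : EisensteinInt) ∣ (n : EisensteinInt) ↔ q ∣ n := by
  rw [← Int.cast_natCast q, intCast_dvd_iff]
  simp [Int.natCast_dvd_natCast]

section Eval

variable {R : Type*} [CommRing R] {w : R}

/-- The ring homomorphism `ℤ[ω] → R` sending `ω` to a root `w` of `X² + X + 1`. -/
def eval (hw : w ^ 2 + w + 1 = 0) : EisensteinInt →+* R :=
  (QuadraticAlgebra.lift (A := R) (R := ℤ) ⟨w, by
    rw [neg_one_zsmul, neg_one_zsmul]; linear_combination hw⟩ : EisensteinInt →ₐ[ℤ] R)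

lemma eval_apply (hw : w ^ 2 + w + 1 = 0) (z : EisensteinInt) : eval hw z = z.re + z.im * w := by
  change z.re • (1 : R) + z.im • w = _
  rw [zsmul_eq_mul, zsmul_eq_mul, mul_one]

lemma sq_root (hw : w ^ 2 + w + 1 = 0) : (w ^ 2) ^ 2 + w ^ 2 + 1 = 0 := by
  linear_combination (w ^ 2 - w + 1) * hw

lemma eval_star (hw : w ^ 2 + w + 1 = 0) (z : EisensteinInt) :
    eval hw (star z) = eval (sq_root hw) z := by
  rw [eval_apply, eval_apply, QuadraticAlgebra.re_star, QuadraticAlgebra.im_star]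
  push_cast
  linear_combination -(z.im : R) * hw

end Eval

section CharP

variable {K : Type*} [Field K] {q : ℕ} [CharP K q] {w : K} {z : EisensteinInt}

lemma natCast_dvd_of_eval_eq_zero (h3 : (3 : K) ≠ 0) (hw : w ^ 2 + w + 1 = 0)
    (h : eval hw z = 0) (h' : eval hw (star z) = 0) : (q : EisensteinInt) ∣ z := by
  rw [eval_star] at h'
  rw [eval_apply] at h h'
  have hw' : 2 * w + 1 ≠ 0 := fun h0 ↦
    h3 (by linear_combination 4 * hw - (2 * w + 1) * h0)
  have him : (z.im : K) = 0 :=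
    (mul_eq_zero.1 (by linear_combination h - h' + (z.im : K) * hw :
      (z.im : K) * (2 * w + 1) = 0)).resolve_right hw'
  have hre : (z.re : K) = 0 := by linear_combination h - w * him
  rw [← Int.cast_natCast, intCast_dvd_iff, ← CharP.intCast_eq_zero_iff K q,
    ← CharP.intCast_eq_zero_iff K q]
  exact ⟨hre, him⟩

lemma natCast_dvd_star_pow_sub_pow_iff (h3 : (3 : K) ≠ 0) (hw : w ^ 2 + w + 1 = 0) {k : ℕ} :
    (q : EisensteinInt) ∣ star z ^ k - z ^ k ↔ eval hw (star z) ^ k = eval hw z ^ k := by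
  rw [← map_pow, ← map_pow, ← sub_eq_zero, ← map_sub]
  refine ⟨fun hdvd ↦ ?_, fun h ↦ natCast_dvd_of_eval_eq_zero h3 hw h ?_⟩
  · have hq := map_dvd (eval hw) hdvd
    rwa [map_natCast, CharP.cast_eq_zero, zero_dvd_iff] at hq
  · rw [star_sub, star_pow, star_pow, star_star, ← neg_sub, map_neg, h, neg_zero]

end CharP

end EisensteinInt

section GaussSum

lemma mulChar_apply_pow_eq_one {R R' : Type*} [CommRing R] [CommRing R'] {χ : MulChar R R'}
    {n : ℕ} (hχ : χ ^ n = 1) {a : R} (ha : IsUnit a) : χ a ^ n = 1 := by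
  lift a to Rˣ using ha
  rw [← MulChar.pow_apply_coe, hχ, MulChar.one_apply_coe]

variable {r q k : ℕ} {K : Type*} [Field K] [CharP K q]

lemma gaussSum_pow_prime_sq [NeZero r] [Fact q.Prime] (hk : q ^ 2 = 3 * k + 1)
    (hqr : q.Coprime r) {χ : MulChar (ZMod r) K} (hχ : χ ^ 3 = 1) (ψ : AddChar (ZMod r) K) :
    χ q ^ 2 * gaussSum χ ψ ^ q ^ 2 = gaussSum χ ψ := by
  obtain ⟨u, hu⟩ := (ZMod.isUnit_iff_coprime q r).2 hqr
  have hfrob : gaussSum χ ψ ^ q ^ 2 = gaussSum χ (ψ.mulShift ((u ^ 2 : (ZMod r)ˣ) : ZMod r)) := by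
    have hχq : χ ^ q ^ 2 = χ := by rw [hk, pow_succ, pow_mul, hχ, one_pow, one_mul]
    rw [pow_two q, pow_mul, gaussSum_frob q, gaussSum_frob q, ← pow_mul, ← pow_mul, ← pow_two,
      hχq, AddChar.pow_mulShift, Nat.cast_pow, Units.val_pow_eq_pow_val, hu]
  rw [hfrob, ← hu, ← map_pow, ← Units.val_pow_eq_pow_val]
  exact gaussSum_mulShift χ ψ (u ^ 2)

lemma gaussSum_pow_three [Fact r.Prime] {χ : MulChar (ZMod r) K} (hχ : χ ^ 3 = 1) (hχ1 : χ ≠ 1)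
    {ψ : AddChar (ZMod r) K} (hψ : ψ.IsPrimitive) :
    gaussSum χ ψ ^ 3 = r * jacobiSum χ χ := by
  have hord : orderOf χ = 3 := orderOf_eq_prime hχ hχ1
  have h := gaussSum_pow_eq_prod_jacobiSum (χ := χ) (by omega) hψ
  rwa [hord, χ.val_neg_one_eq_one_of_odd_order (by decide : Odd 3) hχ, one_mul, ZMod.card,
    show Finset.Ico 1 (3 - 1) = {1} from rfl, Finset.prod_singleton, pow_one] at h

lemma mul_jacobiSum_pow [Fact r.Prime] [Fact q.Prime] [IsAlgClosed K] (hk : q ^ 2 = 3 * k + 1)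
    (hqr : q.Coprime r) {χ : MulChar (ZMod r) K} (hχ : χ ^ 3 = 1) (hχ1 : χ ≠ 1) :
    (r * jacobiSum χ χ) ^ k = χ q := by
  have hr : (r : K) ≠ 0 := by
    rw [Ne, CharP.cast_eq_zero_iff K q]
    exact (Nat.Prime.coprime_iff_not_dvd Fact.out).1 hqr
  have : NeZero (r : K) := ⟨hr⟩
  obtain ⟨ζ, hζ⟩ := HasEnoughRootsOfUnity.exists_primitiveRoot K r
  have hψ := AddChar.zmodChar_primitive_of_primitive_root r hζ
  set g := gaussSum χ (AddChar.zmodChar r hζ.pow_eq_one)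
  have hg : g ≠ 0 := gaussSum_ne_zero_of_nontrivial (by rwa [ZMod.card]) hχ1 hψ
  have hχq : χ q ^ 3 = 1 := mulChar_apply_pow_eq_one hχ ((ZMod.isUnit_iff_coprime q r).2 hqr)
  have hgk : χ q ^ 2 * g ^ (3 * k) = 1 := by
    refine mul_right_cancel₀ hg ?_
    rw [mul_assoc, ← pow_succ, ← hk, one_mul]
    exact gaussSum_pow_prime_sq hk hqr hχ _
  rw [← gaussSum_pow_three hχ hχ1 hψ, ← pow_mul]
  linear_combination χ q * hgk - g ^ (3 * k) * hχq

end GaussSum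

lemma changeLevel_natCast {R : Type*} [CommRing R] {n d : ℕ} (χ : DirichletCharacter R n)
    (hd : n ∣ d) {a : ℕ} (ha : a.Coprime d) :
    DirichletCharacter.changeLevel hd χ a = χ a := by
  have h := DirichletCharacter.changeLevel_eq_cast_of_dvd' χ hd (Nat.isCoprime_iff_coprime.2 ha)
  rwa [Int.cast_natCast, Int.cast_natCast] at h

lemma three_ne_zero_of_charP {R : Type*} [CommRing R] [Nontrivial R] {q k : ℕ} [CharP R q]
    (hk : q ^ 2 = 3 * k + 1) : (3 : R) ≠ 0 := by
  intro h3
  have h : (q : R) ^ 2 = 3 * k + 1 := by exact_mod_cast congrArg (Nat.cast : ℕ → R) hk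
  rw [CharP.cast_eq_zero, h3] at h
  simp at h

lemma pow_char_eq_self_iff {K : Type*} [Field K] {p : ℕ} [Fact p.Prime] [CharP K p] {x : K} :
    x ^ p = x ↔ ∃ n : ℤ, (n : K) = x := by
  rw [← Subfield.mem_bot_iff_pow_eq_self, mem_bot_iff_intCast p]

lemma exists_sq_add_self_add_one_eq_zero (K : Type*) [Field K] [IsAlgClosed K] :
    ∃ w : K, w ^ 2 + w + 1 = 0 := by
  obtain ⟨w, hw⟩ := IsAlgClosed.exists_root (Polynomial.cyclotomic 3 K)
    (by rw [Polynomial.degree_cyclotomic]; decide)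
  exact ⟨w, by simpa [Polynomial.cyclotomic_three] using hw⟩

namespace EisensteinInt

lemma not_natCast_dvd_three {q k : ℕ} (hq : q.Prime) (hk : q ^ 2 = 3 * k + 1) :
    ¬ (q : EisensteinInt) ∣ 3 := by
  intro h
  have h3 : q ∣ 3 := natCast_dvd_natCast_iff.1 (by exact_mod_cast h)
  obtain rfl := (Nat.prime_dvd_prime_iff_eq hq Nat.prime_three).1 h3
  omega

/-- `χ` is the cubic residue symbol `(· / α)` on the rational integers. The law of reciprocity
`(q / α) = (α / q)` at a rational prime `q` with `q² = 3 k + 1` is encoded without residue fields,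
as the congruence `χ(q) ≡ (star α / α) ^ k` modulo `q`. -/
structure IsCubicSymbol {n : ℕ} (χ : DirichletCharacter EisensteinInt n) (α : EisensteinInt) :
    Prop where
  norm_eq : α.norm = n
  pow_three : χ ^ 3 = 1
  natCast_dvd_sub : ∀ {q k : ℕ}, q.Prime → q ^ 2 = 3 * k + 1 → q.Coprime n →
    (q : EisensteinInt) ∣ star α ^ k - α ^ k * χ q

namespace IsCubicSymbol

variable {n m : ℕ} {χ : DirichletCharacter EisensteinInt n} {ψ : DirichletCharacter EisensteinInt m}
  {α β : EisensteinInt}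

lemma apply_pow_three (h : IsCubicSymbol χ α) {a : ℕ} (ha : a.Coprime n) : χ a ^ 3 = 1 :=
  mulChar_apply_pow_eq_one h.pow_three ((ZMod.isUnit_iff_coprime a n).2 ha)

lemma mul (hα : IsCubicSymbol χ α) (hβ : IsCubicSymbol ψ β) :
    IsCubicSymbol (DirichletCharacter.changeLevel (Nat.dvd_mul_right n m) χ *
      DirichletCharacter.changeLevel (Nat.dvd_mul_left m n) ψ) (α * β) where
  norm_eq := by rw [map_mul, hα.norm_eq, hβ.norm_eq, Nat.cast_mul]
  pow_three := by
    rw [mul_pow, ← map_pow, ← map_pow, hα.pow_three, hβ.pow_three, map_one, map_one, mul_one]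
  natCast_dvd_sub {q k} hq hk hqnm := by
    rw [MulChar.mul_apply, changeLevel_natCast χ _ hqnm, changeLevel_natCast ψ _ hqnm]
    have h1 := (hα.natCast_dvd_sub hq hk (Nat.Coprime.coprime_mul_right_right hqnm)).mul_left
      (β ^ k * ψ q)
    have h2 := (hβ.natCast_dvd_sub hq hk (Nat.Coprime.coprime_mul_left_right hqnm)).mul_left
      (star α ^ k)
    convert dvd_add h1 h2 using 1
    rw [star_mul']
    ring

lemma neg (h : IsCubicSymbol χ α) : IsCubicSymbol χ (-α) where
  norm_eq := by rw [QuadraticAlgebra.norm_neg, h.norm_eq]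
  pow_three := h.pow_three
  natCast_dvd_sub {q k} hq hk hqn := by
    convert (h.natCast_dvd_sub hq hk hqn).mul_left ((-1) ^ k) using 1
    rw [star_neg, neg_pow α, neg_pow (star α)]
    ring

protected lemma star (h : IsCubicSymbol χ α) : IsCubicSymbol (χ ^ 2) (star α) where
  norm_eq := by rw [QuadraticAlgebra.norm_star, h.norm_eq]
  pow_three := by rw [← pow_mul, mul_comm, pow_mul, h.pow_three, one_pow]
  natCast_dvd_sub {q k} hq hk hqn := by
    have h3 := h.apply_pow_three hqn
    convert (h.natCast_dvd_sub hq hk hqn).mul_left (-χ q ^ 2) using 1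
    rw [star_star, MulChar.pow_apply' χ two_ne_zero]
    linear_combination -α ^ k * h3

lemma natCast (a : ℕ) :
    IsCubicSymbol (1 : DirichletCharacter EisensteinInt (a ^ 2)) (a : EisensteinInt) where
  norm_eq := by rw [QuadraticAlgebra.norm_natCast, Nat.cast_pow]
  pow_three := one_pow 3
  natCast_dvd_sub {q k} _ _ hqn := by
    rw [MulChar.one_apply ((ZMod.isUnit_iff_coprime q _).2 hqn), star_natCast, mul_one, sub_self]
    exact dvd_zero _

lemma isCoprime_natCast (h : IsCubicSymbol χ α) {q : ℕ} (hqn : q.Coprime n) :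
    IsCoprime (q : EisensteinInt) α := by
  have hn : IsCoprime (q : EisensteinInt) (n : EisensteinInt) := by
    exact_mod_cast (Nat.isCoprime_iff_coprime.2 hqn).map (Int.castRingHom EisensteinInt)
  have hn' : (n : EisensteinInt) = α * star α := by
    rw [← coe_norm, h.norm_eq, Int.cast_natCast]
  exact (hn' ▸ hn).of_mul_right_left

lemma apply_eq_one_iff (h : IsCubicSymbol χ α) {q k : ℕ} (hq : q.Prime) (hk : q ^ 2 = 3 * k + 1)
    (hqn : q.Coprime n) : χ q = 1 ↔ (q : EisensteinInt) ∣ star α ^ k - α ^ k := by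
  have hdvd := h.natCast_dvd_sub hq hk hqn
  refine ⟨fun h1 ↦ by rwa [h1, mul_one] at hdvd, fun h1 ↦ ?_⟩
  refine eq_one_of_pow_three_of_dvd_sub_one (h.apply_pow_three hqn) (not_natCast_dvd_three hq hk) ?_
  refine ((h.isCoprime_natCast hqn).pow_right (n := k)).dvd_of_dvd_mul_left ?_
  convert _root_.dvd_sub h1 hdvd using 1
  ring

end IsCubicSymbol

section JacobiSum

variable {r : ℕ} {χ : DirichletCharacter EisensteinInt r}

lemma ringHomComp_ne_one_of_pow_three {R : Type*} [CommRing R] (h3 : (3 : R) ≠ 0) (hχ : χ ^ 3 = 1)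
    (hχ1 : χ ≠ 1) (f : EisensteinInt →+* R) : χ.ringHomComp f ≠ 1 := by
  refine fun h ↦ hχ1 (MulChar.ext fun u ↦ ?_)
  rw [MulChar.one_apply_coe]
  refine eq_one_of_pow_three_of_map_eq_one h3 (mulChar_apply_pow_eq_one hχ u.isUnit) (f := f) ?_
  rw [← MulChar.ringHomComp_apply, h, MulChar.one_apply_coe]

lemma ringHomComp_star_of_pow_three (hχ : χ ^ 3 = 1) :
    χ.ringHomComp (starRingEnd EisensteinInt) = χ⁻¹ := by
  refine eq_inv_of_mul_eq_one_right (MulChar.ext fun u ↦ ?_)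
  rw [MulChar.mul_apply, MulChar.ringHomComp_apply, starRingEnd_apply, MulChar.one_apply_coe]
  exact mul_star_self_eq_one_of_pow_three (mulChar_apply_pow_eq_one hχ u.isUnit)

variable [Fact r.Prime]

lemma star_jacobiSum (hχ : χ ^ 3 = 1) : star (jacobiSum χ χ) = jacobiSum χ⁻¹ χ⁻¹ := by
  rw [← ringHomComp_star_of_pow_three hχ, jacobiSum_ringHomComp, starRingEnd_apply]

lemma norm_jacobiSum (hχ : χ ^ 3 = 1) (hχ1 : χ ≠ 1) : (jacobiSum χ χ).norm = r := by
  let f := algebraMap EisensteinInt (FractionRing EisensteinInt)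
  have hf : Function.Injective f := IsFractionRing.injective _ _
  have hχ2 : χ * χ ≠ 1 := fun h ↦ hχ1 (by rwa [pow_succ, pow_two, h, one_mul] at hχ)
  have hchar : ringChar (FractionRing EisensteinInt) ≠ ringChar (ZMod r) := by
    rw [ringChar.eq_zero, ZMod.ringChar_zmod_n]
    exact (NeZero.ne r).symm
  have h := jacobiSum_mul_jacobiSum_inv hchar ((MulChar.ringHomComp_ne_one_iff hf).2 hχ1)
    ((MulChar.ringHomComp_ne_one_iff hf).2 hχ1)
    (by rwa [← MulChar.ringHomComp_mul, MulChar.ringHomComp_ne_one_iff hf])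
  rw [MulChar.ringHomComp_inv, jacobiSum_ringHomComp, jacobiSum_ringHomComp, ← map_mul,
    ← star_jacobiSum hχ, ← coe_norm, ZMod.card, ← map_natCast f] at h
  exact_mod_cast hf h

/-- An Eisenstein integer is primary if it is congruent to `1` or `-1` modulo `3`. -/
def IsPrimary (α : EisensteinInt) : Prop :=
  3 ∣ α.im ∧ ¬ 3 ∣ α.re

lemma isPrimary_jacobiSum (hχ : χ ^ 3 = 1) (hr : r % 3 = 1) : IsPrimary (jacobiSum χ χ) := by
  obtain ⟨z, -, hz⟩ := exists_jacobiSum_eq_neg_one_add (by norm_num) hχ hχ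
    (by rw [ZMod.card]; omega) isPrimitiveRoot_omega
  obtain ⟨c, hc⟩ : ∃ c, jacobiSum χ χ = -1 + 3 * c :=
    ⟨-(z * ω), by linear_combination hz + z * omega_sq_add_omega_add_one⟩
  have hre : (jacobiSum χ χ).re = -1 + 3 * c.re := by rw [hc]; simp
  have him : (jacobiSum χ χ).im = 3 * c.im := by rw [hc]; simp
  constructor <;> omega

lemma natCast_dvd_mul_jacobiSum_pow_sub (hχ : χ ^ 3 = 1) (hχ1 : χ ≠ 1) {q k : ℕ} (hq : q.Prime)
    (hk : q ^ 2 = 3 * k + 1) (hqr : q.Coprime r) :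
    (q : EisensteinInt) ∣ (r * jacobiSum χ χ) ^ k - χ q := by
  have : Fact q.Prime := ⟨hq⟩
  let K := AlgebraicClosure (ZMod q)
  have : CharP K q := charP_of_injective_algebraMap (algebraMap (ZMod q) K).injective q
  have h3 : (3 : K) ≠ 0 := three_ne_zero_of_charP hk
  obtain ⟨w, hw⟩ := exists_sq_add_self_add_one_eq_zero K
  have heval {w : K} (hw : w ^ 2 + w + 1 = 0) :
      eval hw ((r * jacobiSum χ χ) ^ k - χ q) = 0 := by
    have hpow := mul_jacobiSum_pow hk hqr
      (by rw [MulChar.ringHomComp_pow, hχ, MulChar.ringHomComp_one])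
      (ringHomComp_ne_one_of_pow_three h3 hχ hχ1 (eval hw))
    rwa [jacobiSum_ringHomComp, MulChar.ringHomComp_apply, ← map_natCast (eval hw), ← map_mul,
      ← map_pow, ← sub_eq_zero, ← map_sub] at hpow
  exact natCast_dvd_of_eval_eq_zero h3 hw (heval hw) ((eval_star hw _).trans (heval _))

lemma isCubicSymbol_jacobiSum (hχ : χ ^ 3 = 1) (hχ1 : χ ≠ 1) : IsCubicSymbol χ (jacobiSum χ χ) where
  norm_eq := norm_jacobiSum hχ hχ1
  pow_three := hχ
  natCast_dvd_sub {q k} hq hk hqr := by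
    have h := natCast_dvd_mul_jacobiSum_pow_sub hχ hχ1 hq hk hqr
    have hinv : χ⁻¹ q = χ q ^ 2 := by
      rw [inv_eq_of_mul_eq_one_right (b := χ ^ 2) (by rw [← pow_succ', hχ]),
        MulChar.pow_apply' χ two_ne_zero]
    have hstar := natCast_dvd_mul_jacobiSum_pow_sub (χ := χ⁻¹) (by rw [inv_pow, hχ, inv_one])
      (inv_ne_one.2 hχ1) hq hk hqr
    rw [← star_jacobiSum hχ, hinv] at hstar
    have hcop : IsCoprime (q : EisensteinInt) ((r : EisensteinInt) ^ k) :=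
      IsCoprime.pow_right hqr.cast
    refine hcop.dvd_of_dvd_mul_left ?_
    convert dvd_sub hstar (h.mul_right (χ q)) using 1
    ring

end JacobiSum

lemma associated_of_dvd_of_norm_eq {x y : EisensteinInt} (hx : x ≠ 0) (hxy : x ∣ y)
    (h : x.norm = y.norm) : Associated x y := by
  obtain ⟨c, rfl⟩ := hxy
  rw [map_mul, eq_comm, mul_eq_left₀ (norm_pos hx).ne'] at h
  exact associated_mul_unit_right x c (isUnit_iff_norm_eq_one.2 h)

lemma norm_eq_of_associated {x y : EisensteinInt} (h : Associated x y) : x.norm = y.norm := by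
  obtain ⟨u, rfl⟩ := h
  rw [map_mul, isUnit_iff_norm_eq_one.1 u.isUnit, mul_one]

lemma exists_prime_natCast_dvd {π : EisensteinInt} (hπ : Prime π) :
    ∃ r : ℕ, r.Prime ∧ π ∣ (r : EisensteinInt) := by
  obtain ⟨n, hn⟩ := Int.eq_ofNat_of_zero_le (norm_nonneg π)
  have hn0 : n ≠ 0 := by
    rintro rfl
    exact (norm_pos hπ.ne_zero).ne' hn
  have hdvd : π ∣ (n.primeFactorsList.map ((↑) : ℕ → EisensteinInt)).prod := by
    rw [← Nat.cast_list_prod, Nat.prod_primeFactorsList hn0,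
      ← Int.cast_natCast (R := EisensteinInt) n, ← hn, coe_norm]
    exact dvd_mul_right π (star π)
  obtain ⟨_, hmem, hr⟩ := (Prime.dvd_prod_iff hπ).1 hdvd
  obtain ⟨r, hrn, rfl⟩ := List.mem_map.1 hmem
  exact ⟨r, Nat.prime_of_mem_primeFactorsList hrn, hr⟩

lemma norm_eq_or_associated_of_prime_of_dvd {π : EisensteinInt} (hπ : Prime π) {r : ℕ}
    (hr : r.Prime) (hπr : π ∣ (r : EisensteinInt)) :
    π.norm = r ∨ Associated π (r : EisensteinInt) := by
  have hdvd : π.norm.natAbs ∣ r ^ 2 := by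
    have h := map_dvd QuadraticAlgebra.norm hπr
    rw [QuadraticAlgebra.norm_natCast] at h
    exact_mod_cast Int.natAbs_dvd_natAbs.2 h
  obtain ⟨i, hi, hnorm⟩ := (Nat.dvd_prime_pow hr).1 hdvd
  have hnorm' : π.norm = (r : ℤ) ^ i := by
    rw [← Int.natAbs_of_nonneg (norm_nonneg π), hnorm, Nat.cast_pow]
  interval_cases i
  · exact absurd (isUnit_iff_norm_eq_one.2 (by simpa using hnorm')) hπ.not_isUnit
  · exact .inl (by simpa using hnorm')
  · exact .inr (associated_of_dvd_of_norm_eq hπ.ne_zero hπr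
      (by rw [hnorm', QuadraticAlgebra.norm_natCast]))

lemma norm_emod_three (z : EisensteinInt) : z.norm % 3 = 0 ∨ z.norm % 3 = 1 := by
  have h : z.norm = (z.re + z.im) ^ 2 - 3 * (z.re * z.im) := by rw [norm_eq]; ring
  have hsq : (z.re + z.im) ^ 2 % 3 = 0 ∨ (z.re + z.im) ^ 2 % 3 = 1 := by
    obtain h | h | h : (z.re + z.im) % 3 = 0 ∨ (z.re + z.im) % 3 = 1 ∨ (z.re + z.im) % 3 = 2 := by
      omega
    all_goals simp [pow_two, Int.mul_emod, h]
  omega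

namespace IsPrimary

variable {α β : EisensteinInt}

lemma mul (hα : IsPrimary α) (hβ : IsPrimary β) : IsPrimary (α * β) := by
  obtain ⟨⟨a, ha⟩, ha'⟩ := hα
  obtain ⟨⟨b, hb⟩, hb'⟩ := hβ
  refine ⟨⟨α.re * b + a * β.re - 3 * a * b, ?_⟩, fun h ↦ ?_⟩
  · rw [QuadraticAlgebra.im_mul, ha, hb]; ring
  · have hre : (α * β).re = α.re * β.re - 3 * (3 * a * b) := by
      rw [QuadraticAlgebra.re_mul, ha, hb]; ring
    rw [hre, dvd_sub_left (dvd_mul_right 3 _), Int.prime_three.dvd_mul] at h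
    exact h.elim ha' hb'

protected lemma star (hα : IsPrimary α) : IsPrimary (star α) := by
  obtain ⟨him, hre⟩ := hα
  refine ⟨?_, ?_⟩
  · rw [QuadraticAlgebra.im_star]; omega
  · rw [QuadraticAlgebra.re_star]; omega

lemma not_three_dvd_norm (hα : IsPrimary α) : ¬ 3 ∣ α.norm := by
  obtain ⟨him, hre⟩ := hα
  have h : α.norm = α.re ^ 2 + α.im * (α.im - α.re) := by rw [norm_eq]; ring
  rw [h, dvd_add_left (him.mul_right _)]
  exact mt Int.prime_three.dvd_of_dvd_pow hre

lemma eq_or_eq_neg_of_associated (hα : IsPrimary α) (hβ : IsPrimary β) (h : Associated α β) :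
    β = α ∨ β = -α := by
  obtain ⟨u, rfl⟩ := h
  have hv := isUnit_iff_norm_eq_one.1 u.isUnit
  generalize (u : EisensteinInt) = v at hβ hv ⊢
  have him : 3 ∣ v.im := by
    have h : α.re * v.im = (α * v).im - α.im * (v.re - v.im) := by
      rw [QuadraticAlgebra.im_mul]; ring
    exact (Int.prime_three.dvd_mul.1 (h ▸ dvd_sub hβ.1 (hα.1.mul_right _))).resolve_left hα.2
  rw [norm_eq] at hv
  have him0 : v.im = 0 := by
    have hlt : v.im ^ 2 < 3 ^ 2 := by nlinarith [sq_nonneg (2 * v.re - v.im)]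
    exact Int.eq_zero_of_abs_lt_dvd him (abs_lt_of_sq_lt_sq hlt (by norm_num))
  have hre : v.re = 1 ∨ v.re = -1 := sq_eq_one_iff.1 (by simpa [him0] using hv)
  refine hre.imp (fun h ↦ ?_) (fun h ↦ ?_)
  · rw [show v = 1 from QuadraticAlgebra.ext h him0, mul_one]
  · rw [show v = -1 from QuadraticAlgebra.ext h (by simpa using him0), mul_neg_one]

end IsPrimary

lemma exists_isPrimary_isCubicSymbol_of_norm_eq_prime {π : EisensteinInt} (hπ : Prime π) {r : ℕ}
    (hr : r.Prime) (hr1 : r % 3 = 1) (hnorm : π.norm = r) :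
    ∃ β, Associated π β ∧ IsPrimary β ∧
      ∃ (n : ℕ) (χ : DirichletCharacter EisensteinInt n), IsCubicSymbol χ β := by
  have : Fact r.Prime := ⟨hr⟩
  obtain ⟨χ, hχ⟩ := MulChar.exists_mulChar_orderOf (ZMod r) (n := 3)
    (by rw [ZMod.card]; omega) isPrimitiveRoot_omega
  have hχ3 : χ ^ 3 = 1 := hχ ▸ pow_orderOf_eq_one χ
  have hχ1 : χ ≠ 1 := fun h ↦ by simp [h] at hχ
  have hJ := isPrimary_jacobiSum hχ3 hr1
  have hJχ := isCubicSymbol_jacobiSum hχ3 hχ1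
  have hdvd : π ∣ jacobiSum χ χ * star (jacobiSum χ χ) := by
    rw [← coe_norm, norm_jacobiSum hχ3 hχ1, ← hnorm, coe_norm]
    exact dvd_mul_right π (star π)
  rcases hπ.dvd_or_dvd hdvd with h | h
  · exact ⟨_, associated_of_dvd_of_norm_eq hπ.ne_zero h (hnorm.trans hJχ.norm_eq.symm),
      hJ, r, χ, hJχ⟩
  · exact ⟨_, associated_of_dvd_of_norm_eq hπ.ne_zero h (hnorm.trans hJχ.star.norm_eq.symm),
      hJ.star, r, _, hJχ.star⟩

lemma exists_isPrimary_isCubicSymbol_of_prime {π : EisensteinInt} (hπ : Prime π)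
    (h3 : ¬ 3 ∣ π.norm) :
    ∃ β, Associated π β ∧ IsPrimary β ∧
      ∃ (n : ℕ) (χ : DirichletCharacter EisensteinInt n), IsCubicSymbol χ β := by
  obtain ⟨r, hr, hdvd⟩ := exists_prime_natCast_dvd hπ
  rcases norm_eq_or_associated_of_prime_of_dvd hπ hr hdvd with h | h
  · have := norm_emod_three π
    exact exists_isPrimary_isCubicSymbol_of_norm_eq_prime hπ hr (by omega) h
  · refine ⟨r, h, ⟨by simp, ?_⟩, _, _, .natCast r⟩
    rw [norm_eq_of_associated h, QuadraticAlgebra.norm_natCast] at h3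
    rw [QuadraticAlgebra.re_natCast]
    exact fun h' ↦ h3 (h'.pow two_ne_zero)

lemma exists_isPrimary_isCubicSymbol (α : EisensteinInt) (h3 : ¬ 3 ∣ α.norm) :
    ∃ β, Associated α β ∧ IsPrimary β ∧
      ∃ (n : ℕ) (χ : DirichletCharacter EisensteinInt n), IsCubicSymbol χ β := by
  induction α using UniqueFactorizationMonoid.induction_on_prime with
  | h₁ => simp at h3
  | h₂ u hu =>
    exact ⟨1, associated_one_iff_isUnit.2 hu, ⟨by simp, by simp⟩, _, _, by simpa using .natCast 1⟩
  | h₃ a π _ hπ ih =>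
    rw [map_mul, Int.prime_three.dvd_mul, not_or] at h3
    obtain ⟨β, hπβ, hβ, n, χ, hχ⟩ := exists_isPrimary_isCubicSymbol_of_prime hπ h3.1
    obtain ⟨γ, haγ, hγ, m, ψ, hψ⟩ := ih h3.2
    exact ⟨β * γ, hπβ.mul_mul haγ, hβ.mul hγ, _, _, hχ.mul hψ⟩

theorem IsPrimary.exists_isCubicSymbol {α : EisensteinInt} (hα : IsPrimary α) :
    ∃ (n : ℕ) (χ : DirichletCharacter EisensteinInt n), IsCubicSymbol χ α := by
  obtain ⟨β, hαβ, hβ, n, χ, hχ⟩ := exists_isPrimary_isCubicSymbol α hα.not_three_dvd_norm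
  rcases hβ.eq_or_eq_neg_of_associated hα hαβ.symm with rfl | rfl
  · exact ⟨n, χ, hχ⟩
  · exact ⟨n, χ, hχ.neg⟩

end EisensteinInt

lemma even_of_prime_sq_eq {q k : ℕ} (hq : q.Prime) (hq2 : q ≠ 2) (hk : q ^ 2 = 3 * k + 1) :
    Even k := by
  have hodd : Odd (3 * k + 1) := hk ▸ (hq.odd_of_ne_two hq2).pow
  simpa [Nat.odd_add_one, Nat.even_mul, parity_simps] using hodd

lemma exists_sq_eq_three_mul_add_one {q : ℕ} (h3 : ¬ 3 ∣ q) : ∃ k, q ^ 2 = 3 * k + 1 := by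
  refine ⟨q ^ 2 / 3, ?_⟩
  have hsq : q ^ 2 % 3 = 1 := by
    obtain h | h : q % 3 = 1 ∨ q % 3 = 2 := by omega
    all_goals simp [Nat.pow_mod, h]
  omega

lemma not_three_dvd_of_sq_eq {q k : ℕ} (hk : q ^ 2 = 3 * k + 1) : ¬ 3 ∣ q := by
  rintro ⟨a, rfl⟩
  have : (3 * a) ^ 2 = 3 * (3 * a ^ 2) := by ring
  omega

lemma squarefree_two_mul_prime {q : ℕ} (hq : q.Prime) (hq2 : q ≠ 2) : Squarefree (2 * q) :=
  (Nat.squarefree_mul ((Nat.coprime_primes Nat.prime_two hq).2 hq2.symm)).2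
    ⟨Nat.prime_two.squarefree, hq.squarefree⟩

namespace EisensteinInt

namespace IsCubicSymbol

variable {n : ℕ} {χ : DirichletCharacter EisensteinInt n} {α : EisensteinInt}

lemma apply_eq_one_of_prime_dvd_trace (h : IsCubicSymbol χ α) {q : ℕ} (hq : q.Prime)
    (hq3 : ¬ 3 ∣ q) (hqn : q.Coprime n) (hdvd : (q : ℤ) ∣ α.trace) : χ q = 1 := by
  obtain ⟨k, hk⟩ := exists_sq_eq_three_mul_add_one hq3
  rw [h.apply_eq_one_iff hq hk hqn]
  have htrace : (q : EisensteinInt) ∣ star α - -α := by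
    have hcast := map_dvd (Int.castRingHom EisensteinInt) hdvd
    simpa [coe_trace, add_comm] using hcast
  by_cases hq2 : q = 2
  · obtain rfl : k = 1 := by subst hq2; omega
    convert dvd_sub htrace (dvd_mul_right (q : EisensteinInt) α) using 1
    rw [hq2]
    push_cast
    ring
  · rw [← (even_of_prime_sq_eq hq hq2 hk).neg_pow α]
    exact htrace.trans (sub_dvd_pow_sub_pow _ _ k)

lemma apply_eq_one_of_dvd_trace (h : IsCubicSymbol χ α) {t : ℕ} (ht3 : ¬ 3 ∣ t)
    (htn : t.Coprime n) (hdvd : (t : ℤ) ∣ α.trace) : χ t = 1 := by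
  induction t using induction_on_primes with
  | zero => exact absurd (dvd_zero 3) ht3
  | one => rw [Nat.cast_one, map_one]
  | prime_mul q a hq ih =>
    rw [Nat.Prime.dvd_mul Nat.prime_three, not_or] at ht3
    rw [Nat.cast_mul] at hdvd
    rw [Nat.cast_mul, map_mul, ih ht3.2 htn.coprime_mul_left (dvd_of_mul_left_dvd hdvd), mul_one]
    exact h.apply_eq_one_of_prime_dvd_trace hq ht3.1 htn.coprime_mul_right
      (dvd_of_mul_right_dvd hdvd)

lemma apply_eq_one_of_eq_trace_sq_add (h : IsCubicSymbol χ α) (h3 : ¬ 3 ∣ α.trace)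
    (h3n : Nat.Coprime 3 n) (hcop : IsCoprime α.trace α.norm) {m : ℕ} {c : ℤ}
    (hm : 27 ^ 2 * (m : ℤ) = α.trace ^ 2 + c * α.norm) : χ m = 1 := by
  set t := α.trace.natAbs with ht
  have htn : t.Coprime n := by
    rw [h.norm_eq] at hcop
    exact Int.isCoprime_iff_gcd_eq_one.1 hcop
  have hχt : χ t = 1 :=
    h.apply_eq_one_of_dvd_trace (fun h' ↦ h3 (Int.natCast_dvd.2 h')) htn
      (Int.natAbs_dvd.2 dvd_rfl)
  have hmod : (3 : ZMod n) ^ 6 * (m : ZMod n) = (t : ZMod n) ^ 2 := by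
    have hcast := congrArg (Int.cast : ℤ → ZMod n) hm
    rw [h.norm_eq, ← Int.natAbs_sq α.trace, ← ht] at hcast
    push_cast [ZMod.natCast_self] at hcast
    linear_combination hcast
  have hχ3 : χ (3 : ZMod n) ^ 3 = 1 := by exact_mod_cast h.apply_pow_three h3n
  calc χ m = (χ 3 ^ 3) ^ 2 * χ m := by rw [hχ3, one_pow, one_mul]
    _ = χ (3 ^ 6 * m) := by rw [map_mul, map_pow, ← pow_mul]
    _ = 1 := by rw [hmod, map_pow, hχt, one_pow]

lemma apply_two_eq_one_iff (h : IsCubicSymbol χ α) (h2 : Nat.Coprime 2 n) :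
    χ 2 = 1 ↔ 2 ∣ α.im := by
  have hiff := h.apply_eq_one_iff (k := 1) Nat.prime_two (by norm_num) h2
  rw [← Int.cast_natCast (R := EisensteinInt) 2, intCast_dvd_iff, pow_one, pow_one] at hiff
  exact hiff.trans (by simp only [QuadraticAlgebra.re_sub, QuadraticAlgebra.im_sub,
    QuadraticAlgebra.re_star, QuadraticAlgebra.im_star]; omega)

end IsCubicSymbol

/-- The Eisenstein integer attached to a value `u² + u v + 6 v²` of the principal form of
discriminant `-23`. Modulo a prime dividing this value, its ratio to its conjugate is, up to sign,
the ratio of the cubes of the Lagrange resolvents of `x³ - x - 1`. -/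
def resolventInt (u v : ℤ) : EisensteinInt :=
  ⟨5 * u - 6 * v, 6 * u + 9 * v⟩

section ResolventInt

variable {u v : ℤ}

lemma trace_resolventInt (u v : ℤ) : (resolventInt u v).trace = 4 * u - 21 * v := by
  rw [QuadraticAlgebra.trace_def, resolventInt]; ring

lemma norm_resolventInt (u v : ℤ) :
    (resolventInt u v).norm = 31 * u ^ 2 + 39 * u * v + 171 * v ^ 2 := by
  rw [norm_eq, resolventInt]; ring

lemma trace_sq_add_norm_resolventInt (u v : ℤ) :
    27 ^ 2 * (u ^ 2 + u * v + 6 * v ^ 2) =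
      (resolventInt u v).trace ^ 2 + 23 * (resolventInt u v).norm := by
  rw [trace_resolventInt, norm_resolventInt]; ring

lemma isPrimary_resolventInt (hu : ¬ 3 ∣ u) : IsPrimary (resolventInt u v) := by
  constructor <;> dsimp only [resolventInt] <;> omega

lemma not_three_dvd_trace_resolventInt (hu : ¬ 3 ∣ u) : ¬ 3 ∣ (resolventInt u v).trace := by
  rw [trace_resolventInt]; omega

lemma isCoprime_trace_norm_resolventInt (huv : IsCoprime u v) (hu : ¬ 3 ∣ u) :
    IsCoprime (resolventInt u v).trace (resolventInt u v).norm := by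
  have hT3 : IsCoprime (resolventInt u v).trace (3 ^ 9) :=
    ((Int.prime_three.coprime_iff_not_dvd.2 (not_three_dvd_trace_resolventInt hu)).symm).pow_right
  obtain ⟨x, y, hxy⟩ := hT3
  obtain ⟨a, b, hab⟩ := huv.pow (m := 2) (n := 2)
  -- `3 ^ 9` is the resultant of the trace and the norm, viewed as binary forms in `u` and `v`.
  refine ⟨x - y * (a * (-1503 * u - 3591 * v) + b * (124 * u + 807 * v)),
    y * (441 * a + 16 * b), ?_⟩
  rw [trace_resolventInt] at hxy ⊢
  rw [norm_resolventInt]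
  linear_combination hxy + y * 3 ^ 9 * hab

lemma not_three_dvd_of_eq {m : ℕ} (h3 : ¬ 3 ∣ m) (h : u ^ 2 + u * v + 6 * v ^ 2 = m) :
    ¬ 3 ∣ u := by
  rintro ⟨w, rfl⟩
  refine h3 (Int.natCast_dvd_natCast.1 ⟨3 * w ^ 2 + w * v + 2 * v ^ 2, ?_⟩)
  rw [← h]; push_cast; ring

lemma isCoprime_of_squarefree {m : ℕ} (hm : Squarefree m) (h : u ^ 2 + u * v + 6 * v ^ 2 = m) :
    IsCoprime u v := by
  rw [← gcd_isUnit_iff]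
  refine Int.squarefree_natCast.2 hm _ ?_
  obtain ⟨a, ha⟩ := gcd_dvd_left u v
  obtain ⟨b, hb⟩ := gcd_dvd_right u v
  refine ⟨a ^ 2 + a * b + 6 * b ^ 2, ?_⟩
  rw [← h]
  generalize gcd u v = g at *
  rw [ha, hb]; ring

end ResolventInt

namespace IsCubicSymbol

variable {n m : ℕ} {χ : DirichletCharacter EisensteinInt n} {u v : ℤ}

lemma coprime_of_eq (h : IsCubicSymbol χ (resolventInt u v)) (hm : Squarefree m) (h3 : ¬ 3 ∣ m)
    (hf : u ^ 2 + u * v + 6 * v ^ 2 = m) : m.Coprime n := by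
  have hcop := (isCoprime_trace_norm_resolventInt (isCoprime_of_squarefree hm hf)
    (not_three_dvd_of_eq h3 hf)).pow_left (m := 2)
  have hadd := (IsCoprime.add_mul_right_left_iff (z := 23)).2 hcop
  rw [← trace_sq_add_norm_resolventInt, hf, h.norm_eq] at hadd
  exact Nat.isCoprime_iff_coprime.1 hadd.of_mul_left_right

lemma apply_eq_one_of_eq (h : IsCubicSymbol χ (resolventInt u v)) (hm : Squarefree m)
    (h3 : ¬ 3 ∣ m) (hf : u ^ 2 + u * v + 6 * v ^ 2 = m) : χ m = 1 := by
  have hu := not_three_dvd_of_eq h3 hf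
  refine h.apply_eq_one_of_eq_trace_sq_add (c := 23) (not_three_dvd_trace_resolventInt hu) ?_
    (isCoprime_trace_norm_resolventInt (isCoprime_of_squarefree hm hf) hu) ?_
  · have := (isPrimary_resolventInt (v := v) hu).not_three_dvd_norm
    rw [h.norm_eq] at this
    exact (Nat.Prime.coprime_iff_not_dvd Nat.prime_three).2 (by exact_mod_cast this)
  · rw [← hf, trace_sq_add_norm_resolventInt]

lemma apply_two_ne_one_of_eq (h : IsCubicSymbol χ (resolventInt u v)) (hm : Squarefree m)
    (h3 : ¬ 3 ∣ m) (hf : u ^ 2 + u * v + 6 * v ^ 2 = m) (h2 : 2 ∣ m) : χ 2 ≠ 1 := by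
  rw [Ne, h.apply_two_eq_one_iff ((h.coprime_of_eq hm h3 hf).coprime_dvd_left h2)]
  intro him
  have hv : 2 ∣ v := by dsimp only [resolventInt] at him; omega
  have hu : 2 ∣ u ^ 2 := by
    obtain ⟨w, rfl⟩ := hv
    have hm2 : (2 : ℤ) ∣ m := Int.natCast_dvd_natCast.2 h2
    rw [← hf] at hm2
    rw [← dvd_sub_left hm2]
    exact ⟨-(u * w + 12 * w ^ 2), by ring⟩
  exact Int.prime_two.not_isUnit
    ((isCoprime_of_squarefree hm hf).isUnit_of_dvd' (Int.prime_two.dvd_of_dvd_pow hu) hv)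

end IsCubicSymbol

section Prime

variable {p k : ℕ} {u v : ℤ}

lemma natCast_dvd_of_eq_prime (hp : p.Prime) (hk : p ^ 2 = 3 * k + 1)
    (hf : u ^ 2 + u * v + 6 * v ^ 2 = p) :
    (p : EisensteinInt) ∣ star (resolventInt u v) ^ k - resolventInt u v ^ k := by
  have h3 := not_three_dvd_of_sq_eq hk
  obtain ⟨n, χ, h⟩ :=
    (isPrimary_resolventInt (v := v) (not_three_dvd_of_eq h3 hf)).exists_isCubicSymbol
  exact (h.apply_eq_one_iff hp hk (h.coprime_of_eq hp.squarefree h3 hf)).1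
    (h.apply_eq_one_of_eq hp.squarefree h3 hf)

lemma not_natCast_dvd_of_eq_two_mul_prime (hp : p.Prime) (hp2 : p ≠ 2) (hk : p ^ 2 = 3 * k + 1)
    (hf : u ^ 2 + u * v + 6 * v ^ 2 = (2 * p : ℕ)) :
    ¬ (p : EisensteinInt) ∣ star (resolventInt u v) ^ k - resolventInt u v ^ k := by
  have h3 : ¬ 3 ∣ 2 * p := by have := not_three_dvd_of_sq_eq hk; omega
  have hm := squarefree_two_mul_prime hp hp2
  obtain ⟨n, χ, h⟩ :=
    (isPrimary_resolventInt (v := v) (not_three_dvd_of_eq h3 hf)).exists_isCubicSymbol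
  rw [← h.apply_eq_one_iff hp hk (h.coprime_of_eq hm h3 hf).coprime_mul_left]
  intro hχp
  have hχ := h.apply_eq_one_of_eq hm h3 hf
  rw [Nat.cast_mul, map_mul, hχp, mul_one] at hχ
  exact h.apply_two_ne_one_of_eq hm h3 hf (dvd_mul_right 2 p) hχ

end Prime

end EisensteinInt

/-- Up to a factor `1` or `2`, the binary quadratic form `a u² + b u v + c v²` arises from the
principal form `u² + u v + 6 v²` of discriminant `-23` by an integral linear substitution. -/
def IsPrincipalUpToTwo (a b c : ℤ) : Prop :=
  ∃ e x y z t : ℤ, (e = 1 ∨ e = 2) ∧ x ^ 2 + x * z + 6 * z ^ 2 = e * a ∧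
    2 * x * y + x * t + y * z + 12 * z * t = e * b ∧ y ^ 2 + y * t + 6 * t ^ 2 = e * c

namespace IsPrincipalUpToTwo

variable {a b c : ℤ}

lemma swap : IsPrincipalUpToTwo a b c → IsPrincipalUpToTwo c b a := by
  rintro ⟨e, x, y, z, t, he, ha, hb, hc⟩
  exact ⟨e, y, x, t, z, he, hc, by linear_combination hb, ha⟩

lemma neg_middle : IsPrincipalUpToTwo a b c → IsPrincipalUpToTwo a (-b) c := by
  rintro ⟨e, x, y, z, t, he, ha, hb, hc⟩
  exact ⟨e, x, -y, z, -t, he, ha, by linear_combination -hb, by linear_combination hc⟩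

lemma of_translate (k : ℤ) :
    IsPrincipalUpToTwo a (b - 2 * a * k) (c - b * k + a * k ^ 2) → IsPrincipalUpToTwo a b c := by
  rintro ⟨e, x, y, z, t, he, ha, hb, hc⟩
  exact ⟨e, x, y + x * k, z, t + z * k, he, ha, by linear_combination hb + 2 * k * ha,
    by linear_combination hc + k * hb + k ^ 2 * ha⟩

lemma of_reduced (ha : 0 < a) (hD : discrim a b c = -23) (hb : |b| ≤ a) (hac : a ≤ c) :
    IsPrincipalUpToTwo a b c := by
  wlog hb0 : 0 ≤ b generalizing b
  · rw [← neg_neg b]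
    exact (this (by rwa [discrim, neg_sq]) (by rwa [abs_neg]) (by omega)).neg_middle
  rw [discrim] at hD
  rw [abs_of_nonneg hb0] at hb
  have ha2 : a ≤ 2 := by nlinarith
  interval_cases a <;> interval_cases b
  · omega
  · exact ⟨1, 1, 0, 0, 1, Or.inl rfl, by norm_num, by norm_num, by omega⟩
  · omega
  · exact ⟨2, 2, 0, 0, 1, Or.inr rfl, by norm_num, by norm_num, by omega⟩
  · omega

lemma of_discrim (ha : 0 < a) (hD : discrim a b c = -23) : IsPrincipalUpToTwo a b c := by
  induction hn : a.toNat using Nat.strong_induction_on generalizing a b c with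
  | _ n ih =>
    have hk0 := Int.emod_nonneg (b + a) (b := 2 * a) (by omega)
    have hk1 := Int.emod_lt_of_pos (b + a) (b := 2 * a) (by omega)
    have hk := Int.emod_add_mul_ediv (b + a) (2 * a)
    set k := (b + a) / (2 * a)
    refine of_translate k ?_
    have hD' : discrim a (b - 2 * a * k) (c - b * k + a * k ^ 2) = -23 := by
      rw [← hD, discrim, discrim]; ring
    have hb : |b - 2 * a * k| ≤ a := abs_le.2 ⟨by linarith, by linarith⟩
    generalize b - 2 * a * k = b', c - b * k + a * k ^ 2 = c' at *
    rcases le_or_gt a c' with hac | hca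
    · exact of_reduced ha hD' hb hac
    · rw [discrim] at hD'
      have hc : 0 < c' := by nlinarith [sq_nonneg b']
      exact (ih c'.toNat (by omega) hc (by rw [discrim]; linarith) rfl).swap

end IsPrincipalUpToTwo

lemma exists_eq_or_eq_two_mul_of_dvd_sq_add {p : ℕ} (hp : Odd p) {d : ℤ}
    (hd : (p : ℤ) ∣ d ^ 2 + 23) :
    ∃ u v : ℤ, u ^ 2 + u * v + 6 * v ^ 2 = p ∨ u ^ 2 + u * v + 6 * v ^ 2 = (2 * p : ℕ) := by
  have hp' : Odd (p : ℤ) := by exact_mod_cast hp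
  obtain ⟨b, hbo, hb⟩ : ∃ b : ℤ, Odd b ∧ (p : ℤ) ∣ b ^ 2 + 23 := by
    rcases d.even_or_odd with hde | hdo
    · refine ⟨d + p, hde.add_odd hp', ?_⟩
      have hsq : (d + p) ^ 2 + 23 = d ^ 2 + 23 + p * (2 * d + p) := by ring
      exact hsq ▸ dvd_add hd (dvd_mul_right _ _)
    · exact ⟨d, hdo, hd⟩
  have h4 : (4 : ℤ) ∣ b ^ 2 + 23 := by
    have := Int.sq_mod_four_eq_one_of_odd hbo
    omega
  have hcop : IsCoprime (4 : ℤ) p := by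
    simpa using (Int.isCoprime_two_left.2 hp').pow_left (m := 2)
  obtain ⟨c, hc⟩ := hcop.mul_dvd h4 hb
  obtain ⟨e, u, -, v, -, rfl | rfl, h, -⟩ := IsPrincipalUpToTwo.of_discrim (a := p) (b := b)
    (c := c) (by exact_mod_cast hp.pos) (by rw [discrim]; linear_combination hc)
  · exact ⟨u, v, Or.inl (by rw [h, one_mul])⟩
  · exact ⟨u, v, Or.inr (by rw [h]; norm_cast)⟩

lemma exists_sq_add_eq_iff {p : ℤ} (hp : Odd p) :
    (∃ X Y : ℤ, p = X ^ 2 + 23 * Y ^ 2) ↔ ∃ u v : ℤ, u ^ 2 + u * v + 6 * v ^ 2 = p := by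
  constructor
  · rintro ⟨X, Y, rfl⟩
    exact ⟨X - Y, 2 * Y, by ring⟩
  · rintro ⟨u, v, rfl⟩
    have hv : Even v := by
      simp only [parity_simps] at hp
      grind
    obtain ⟨y, rfl⟩ := hv
    exact ⟨u + y, y, by ring⟩

/-- The Padovan sequence, by its initial values and recurrence. -/
structure IsPadovan (B : ℕ → ℤ) : Prop where
  zero : B 0 = 0
  one : B 1 = 1
  two : B 2 = 1
  add_three : ∀ n, B (n + 3) = B (n + 1) + B n

/-- `α`, `β`, `γ` are the roots of the characteristic polynomial `x³ - x - 1` of the Padovan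
sequence, counted with multiplicity; this is encoded by Vieta's formulas. -/
structure IsRootTriple {R : Type*} [CommRing R] (α β γ : R) : Prop where
  add_eq : α + β + γ = 0
  mul_add_eq : α * β + β * γ + γ * α = -1
  mul_eq : α * β * γ = 1

lemma exists_isRootTriple (K : Type*) [Field K] [IsAlgClosed K] :
    ∃ α β γ : K, IsRootTriple α β γ := by
  open Polynomial in
  obtain ⟨α, hα⟩ := IsAlgClosed.exists_root (X ^ 3 - X - 1 : K[X]) (by
    have : (X ^ 3 - X - 1 : K[X]).degree = 3 := by compute_degree!
    rw [this]; decide)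
  open Polynomial in
  obtain ⟨β, hβ⟩ := IsAlgClosed.exists_root (X ^ 2 + C α * X + C (α ^ 2 - 1) : K[X]) (by
    have : (X ^ 2 + C α * X + C (α ^ 2 - 1) : K[X]).degree = 2 := by compute_degree!
    rw [this]; decide)
  simp only [Polynomial.IsRoot, Polynomial.eval_add, Polynomial.eval_sub, Polynomial.eval_pow,
    Polynomial.eval_X, Polynomial.eval_one, Polynomial.eval_mul, Polynomial.eval_C] at hα hβ
  exact ⟨α, β, -α - β, by ring, by linear_combination -hβ, by linear_combination hα - α * hβ⟩

namespace IsRootTriple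

section CommRing

variable {R : Type*} [CommRing R] {α β γ : R}

/-- The square root `(α - β) (β - γ) (γ - α)` of the discriminant of `(x - α) (x - β) (x - γ)`. -/
def delta (α β γ : R) : R := (α - β) * (β - γ) * (γ - α)

lemma delta_rotate (α β γ : R) : delta β γ α = delta α β γ := by
  rw [delta, delta]; ring

lemma rotate (h : IsRootTriple α β γ) : IsRootTriple β γ α where
  add_eq := by linear_combination h.add_eq
  mul_add_eq := by linear_combination h.mul_add_eq
  mul_eq := by linear_combination h.mul_eq

lemma swap (h : IsRootTriple α β γ) : IsRootTriple α γ β where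
  add_eq := by linear_combination h.add_eq
  mul_add_eq := by linear_combination h.mul_add_eq
  mul_eq := by linear_combination h.mul_eq

lemma pow_three_sub_sub_one (h : IsRootTriple α β γ) (x : R) :
    x ^ 3 - x - 1 = (x - α) * (x - β) * (x - γ) := by
  linear_combination x ^ 2 * h.add_eq - x * h.mul_add_eq + h.mul_eq

lemma pow_three (h : IsRootTriple α β γ) : α ^ 3 = α + 1 := by
  linear_combination h.pow_three_sub_sub_one α

lemma delta_sq (h : IsRootTriple α β γ) : delta α β γ ^ 2 = -23 := by
  have hγ : γ = -α - β := by linear_combination h.add_eq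
  have hp : α ^ 2 + α * β + β ^ 2 = 1 := by
    linear_combination -h.mul_add_eq + (α + β) * h.add_eq
  have hq : α * β * (α + β) = -1 := by linear_combination α * β * h.add_eq - h.mul_eq
  calc delta α β γ ^ 2
      = 4 * (α ^ 2 + α * β + β ^ 2) ^ 3 - 27 * (α * β * (α + β)) ^ 2 := by
        rw [delta, hγ]; ring
    _ = -23 := by rw [hp, hq]; norm_num

lemma binet (h : IsRootTriple α β γ) {B : ℕ → ℤ} (hB : IsPadovan B) (n : ℕ) :
    α ^ (n + 3) * (β - γ) + β ^ (n + 3) * (γ - α) + γ ^ (n + 3) * (α - β) =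
      -delta α β γ * B n := by
  have hα := h.pow_three
  have hβ := h.rotate.pow_three
  have hγ := h.rotate.rotate.pow_three
  induction n using Nat.strong_induction_on with
  | _ n ih =>
    match n, ih with
    | 0, _ =>
      rw [hB.zero, delta]
      push_cast
      linear_combination hα * (β - γ) + hβ * (γ - α) + hγ * (α - β)
    | 1, _ =>
      rw [hB.one, delta]
      push_cast
      linear_combination α * hα * (β - γ) + β * hβ * (γ - α) + γ * hγ * (α - β)
    | 2, _ =>
      rw [hB.two, delta]
      push_cast
      linear_combination (α ^ 2 + 1) * hα * (β - γ) + (β ^ 2 + 1) * hβ * (γ - α) +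
        (γ ^ 2 + 1) * hγ * (α - β)
    | m + 3, ih =>
      rw [hB.add_three]
      push_cast
      linear_combination ih m (by omega) + ih (m + 1) (by omega) +
        α ^ (m + 3) * hα * (β - γ) + β ^ (m + 3) * hβ * (γ - α) + γ ^ (m + 3) * hγ * (α - β)

lemma binet_sub_one (h : IsRootTriple α β γ) {B : ℕ → ℤ} (hB : IsPadovan B) {n : ℕ}
    (hn : 0 < n) :
    α ^ n * α ^ 2 * (β - γ) + β ^ n * β ^ 2 * (γ - α) + γ ^ n * γ ^ 2 * (α - β) =
      -delta α β γ * B (n - 1) := by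
  have hn1 : n - 1 + 3 = n + 2 := by omega
  simpa only [hn1, pow_add] using h.binet hB (n - 1)

end CommRing

section CharP

variable {K : Type*} [Field K] {p : ℕ} [hp : Fact p.Prime] [CharP K p] {α β γ : K}

lemma delta_ne_zero (h : IsRootTriple α β γ) (h23 : (23 : K) ≠ 0) : delta α β γ ≠ 0 := by
  intro h0
  have hsq := h.delta_sq
  rw [h0] at hsq
  exact h23 (by linear_combination hsq)

lemma delta_pow_char (α β γ : K) : delta α β γ ^ p = delta (α ^ p) (β ^ p) (γ ^ p) := by
  simp only [delta, mul_pow, sub_pow_char]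

lemma pow_char_mem (h : IsRootTriple α β γ) : α ^ p = α ∨ α ^ p = β ∨ α ^ p = γ := by
  have hroot : (α ^ p) ^ 3 = α ^ p + 1 := by
    rw [← pow_mul, mul_comm, pow_mul, h.pow_three, add_pow_char, one_pow]
  have hprod : (α ^ p - α) * (α ^ p - β) * (α ^ p - γ) = 0 := by
    rw [← h.pow_three_sub_sub_one, hroot]; ring
  simpa only [mul_eq_zero, sub_eq_zero, or_assoc] using hprod

/-- The Frobenius endomorphism `x ↦ x ^ p` fixes each root. -/
def FrobeniusFixes (p : ℕ) (α β γ : K) : Prop := α ^ p = α ∧ β ^ p = β ∧ γ ^ p = γ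

/-- The Frobenius endomorphism `x ↦ x ^ p` permutes the roots by the cycle `α → β → γ → α`. -/
def FrobeniusCycles (p : ℕ) (α β γ : K) : Prop := α ^ p = β ∧ β ^ p = γ ∧ γ ^ p = α

/-- The Frobenius endomorphism `x ↦ x ^ p` fixes `α` and exchanges `β` and `γ`. -/
def FrobeniusSwaps (p : ℕ) (α β γ : K) : Prop := α ^ p = α ∧ β ^ p = γ ∧ γ ^ p = β

lemma frobenius_cases (h : IsRootTriple α β γ) (h23 : (23 : K) ≠ 0) :
    FrobeniusFixes p α β γ ∨ (FrobeniusCycles p α β γ ∨ FrobeniusCycles p α γ β) ∨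
      FrobeniusSwaps p α β γ ∨ FrobeniusSwaps p β γ α ∨ FrobeniusSwaps p γ α β := by
  have hδ := h.delta_ne_zero h23
  rw [← pow_ne_zero_iff hp.out.ne_zero, delta_pow_char, delta] at hδ
  have hα := h.pow_char_mem (p := p)
  have hβ := h.rotate.pow_char_mem (p := p)
  have hγ := h.rotate.rotate.pow_char_mem (p := p)
  unfold FrobeniusFixes FrobeniusCycles FrobeniusSwaps
  rcases hα with hα | hα | hα <;> rcases hβ with hβ | hβ | hβ <;> rcases hγ with hγ | hγ | hγ <;>
    simp only [hα, hβ, hγ, sub_self, mul_zero, zero_mul, ne_eq, not_true_eq_false] at hδ ⊢ <;>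
    simp only [true_and, and_true, true_or, or_true, and_self]

lemma not_dvd_of_frobeniusCycles (h : IsRootTriple α β γ) {B : ℕ → ℤ} (hB : IsPadovan B)
    (hc : FrobeniusCycles p α β γ) : ¬ (p : ℤ) ∣ B (p - 1) := by
  intro hdvd
  have hsum := h.binet_sub_one hB hp.out.pos
  rw [(CharP.intCast_eq_zero_iff K p _).2 hdvd, hc.1, hc.2.1, hc.2.2] at hsum
  refine one_ne_zero (α := K) ?_
  linear_combination hsum + (1 - α * β - β * γ - γ * α) * h.mul_add_eq +
    3 * (α * β * γ) * h.add_eq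

lemma not_dvd_of_frobeniusSwaps (h : IsRootTriple α β γ) (h23 : (23 : K) ≠ 0) {B : ℕ → ℤ}
    (hB : IsPadovan B) (hs : FrobeniusSwaps p α β γ) : ¬ (p : ℤ) ∣ B (p - 1) := by
  intro hdvd
  have hsum := h.binet_sub_one hB hp.out.pos
  rw [(CharP.intCast_eq_zero_iff K p _).2 hdvd, hs.1, hs.2.1, hs.2.2] at hsum
  have hα : α ≠ 0 := by
    rintro rfl
    simpa only [zero_mul, zero_ne_one] using h.mul_eq
  have hβγ : β - γ ≠ 0 := right_ne_zero_of_mul (left_ne_zero_of_mul (h.delta_ne_zero h23))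
  refine mul_ne_zero hβγ hα ?_
  linear_combination hsum - (β - γ) * h.pow_three + (β - γ) * h.mul_eq

lemma natCast_dvd_iff_frobeniusFixes (h : IsRootTriple α β γ) (h23 : (23 : K) ≠ 0) {B : ℕ → ℤ}
    (hB : IsPadovan B) : (p : ℤ) ∣ B (p - 1) ↔ FrobeniusFixes p α β γ := by
  constructor
  · intro hdvd
    rcases h.frobenius_cases h23 (p := p) with hf | (hc | hc) | hs | hs | hs
    · exact hf
    · exact absurd hdvd (h.not_dvd_of_frobeniusCycles hB hc)
    · exact absurd hdvd (h.swap.not_dvd_of_frobeniusCycles hB hc)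
    · exact absurd hdvd (h.not_dvd_of_frobeniusSwaps h23 hB hs)
    · exact absurd hdvd (h.rotate.not_dvd_of_frobeniusSwaps h23 hB hs)
    · exact absurd hdvd (h.rotate.rotate.not_dvd_of_frobeniusSwaps h23 hB hs)
  · rintro ⟨hα, hβ, hγ⟩
    rw [← CharP.intCast_eq_zero_iff K p]
    have hsum := h.binet_sub_one hB hp.out.pos
    rw [hα, hβ, hγ] at hsum
    refine (mul_eq_zero.1 ?_).resolve_left (neg_ne_zero.2 (h.delta_ne_zero h23))
    linear_combination -hsum + (β - γ) * h.pow_three + (γ - α) * h.rotate.pow_three +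
      (α - β) * h.rotate.rotate.pow_three

lemma FrobeniusFixes.delta_pow_char (hf : FrobeniusFixes p α β γ) :
    delta α β γ ^ p = delta α β γ := by
  rw [IsRootTriple.delta_pow_char, hf.1, hf.2.1, hf.2.2]

lemma FrobeniusSwaps.delta_pow_char (hs : FrobeniusSwaps p α β γ) :
    delta α β γ ^ p = -delta α β γ := by
  rw [IsRootTriple.delta_pow_char, hs.1, hs.2.1, hs.2.2, delta, delta]; ring

lemma not_frobeniusSwaps_of_delta_pow_char (h : IsRootTriple α β γ) (h2 : (2 : K) ≠ 0)
    (h23 : (23 : K) ≠ 0) (hδ : delta α β γ ^ p = delta α β γ) : ¬ FrobeniusSwaps p α β γ := by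
  intro hs
  rw [hs.delta_pow_char] at hδ
  exact mul_ne_zero h2 (h.delta_ne_zero h23) (by linear_combination -hδ)

lemma frobeniusFixes_or_frobeniusCycles (h : IsRootTriple α β γ) (h2 : (2 : K) ≠ 0)
    (h23 : (23 : K) ≠ 0) (hδ : delta α β γ ^ p = delta α β γ) :
    FrobeniusFixes p α β γ ∨ FrobeniusCycles p α β γ ∨ FrobeniusCycles p α γ β := by
  have hδ' : delta β γ α ^ p = delta β γ α := by rwa [delta_rotate]
  have hδ'' : delta γ α β ^ p = delta γ α β := by rwa [delta_rotate]
  rcases h.frobenius_cases h23 (p := p) with hf | hc | hs | hs | hs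
  · exact Or.inl hf
  · exact Or.inr hc
  · exact absurd hs (h.not_frobeniusSwaps_of_delta_pow_char h2 h23 hδ)
  · exact absurd hs (h.rotate.not_frobeniusSwaps_of_delta_pow_char h2 h23 hδ')
  · exact absurd hs (h.rotate.rotate.not_frobeniusSwaps_of_delta_pow_char h2 h23 hδ'')

end CharP
/-- The Lagrange resolvent of `α`, `β`, `γ` for the cube root of unity `w`. -/
def resolvent {R : Type*} [CommRing R] (w α β γ : R) : R := α + w * β + w ^ 2 * γ

section CommRing

variable {R : Type*} [CommRing R] {w α β γ : R}

lemma resolvent_swap (hw : w ^ 2 + w + 1 = 0) :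
    resolvent w α γ β = resolvent (w ^ 2) α β γ := by
  rw [resolvent, resolvent]
  linear_combination -γ * (w ^ 2 - w) * hw

lemma resolvent_sq_swap (hw : w ^ 2 + w + 1 = 0) :
    resolvent (w ^ 2) α γ β = resolvent w α β γ := by
  rw [resolvent, resolvent]
  linear_combination β * (w ^ 2 - w) * hw

lemma resolvent_mul_resolvent_sq (h : IsRootTriple α β γ) (hw : w ^ 2 + w + 1 = 0) :
    resolvent w α β γ * resolvent (w ^ 2) α β γ = 3 := by
  rw [resolvent, resolvent]
  linear_combination (α + β + γ) * h.add_eq - 3 * h.mul_add_eq +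
    (β ^ 2 * (w - 1) + γ ^ 2 * (w - 1) * (w ^ 3 + 1) + α * β + α * γ * (w ^ 2 - w + 1) +
      β * γ * (w ^ 3 - w + 1)) * hw

lemma two_mul_resolvent_pow_three (h : IsRootTriple α β γ) (hw : w ^ 2 + w + 1 = 0) :
    2 * resolvent w α β γ ^ 3 = 3 * (9 - (1 + 2 * w) * delta α β γ) := by
  have hγ : γ = -α - β := by linear_combination h.add_eq
  have hR : resolvent w α β γ = (2 + w) * α + (1 + 2 * w) * β := by
    rw [resolvent, hγ]; linear_combination (-α - β) * hw
  have hA : (2 + w) ^ 2 = 3 + 3 * w := by linear_combination hw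
  have hS : (1 + 2 * w) ^ 2 = -3 := by linear_combination 4 * hw
  have hR3 : resolvent w α β γ ^ 3 = (3 + 6 * w) * α ^ 3 + 3 * (3 * w - 3) * α ^ 2 * β
      + 3 * (-6 - 3 * w) * α * β ^ 2 - (3 + 6 * w) * β ^ 3 := by
    rw [hR]
    linear_combination α ^ 3 * ((2 + w) * hA + 3 * hw) + 3 * α ^ 2 * β * ((1 + 2 * w) * hA + 6 * hw)
      + 3 * α * β ^ 2 * (2 + w) * hS + β ^ 3 * (1 + 2 * w) * hS
  have h9 : (9 : R) = 9 * (α * β * γ) := by rw [h.mul_eq, mul_one]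
  rw [hR3, h9, delta, hγ]
  ring

end CommRing

section CharP

variable {K : Type*} [Field K] {p k : ℕ} [hp : Fact p.Prime] [CharP K p] {w α β γ : K}

lemma resolvent_ne_zero (h : IsRootTriple α β γ) (h3 : (3 : K) ≠ 0) (hw : w ^ 2 + w + 1 = 0) :
    resolvent w α β γ ≠ 0 :=
  left_ne_zero_of_mul (h.resolvent_mul_resolvent_sq hw ▸ h3)

lemma resolvent_pow_char_sq (hw : w ^ 2 + w + 1 = 0) (hk : p ^ 2 = 3 * k + 1) :
    resolvent w α β γ ^ p ^ 2 = resolvent w (α ^ p ^ 2) (β ^ p ^ 2) (γ ^ p ^ 2) := by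
  have hw3 : w ^ 3 = 1 := by linear_combination (w - 1) * hw
  have hwp : w ^ p ^ 2 = w := by rw [hk, pow_succ, pow_mul, hw3, one_pow, one_mul]
  have hwp' : (w ^ 2) ^ p ^ 2 = w ^ 2 := by rw [← pow_mul, mul_comm, pow_mul, hwp]
  rw [resolvent, add_pow_char_pow, add_pow_char_pow, mul_pow, mul_pow, hwp, hwp', resolvent]

lemma resolvent_pow_of_pow_char_sq (h : IsRootTriple α β γ) (hw : w ^ 2 + w + 1 = 0)
    (hk : p ^ 2 = 3 * k + 1) {ε : K}
    (hε : resolvent w (α ^ p ^ 2) (β ^ p ^ 2) (γ ^ p ^ 2) = ε * resolvent w α β γ) :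
    resolvent w α β γ ^ (3 * k) = ε := by
  refine mul_right_cancel₀ (h.resolvent_ne_zero (three_ne_zero_of_charP hk) hw) ?_
  rw [← pow_succ, ← hk, resolvent_pow_char_sq hw hk, hε]

lemma FrobeniusFixes.resolvent_pow (h : IsRootTriple α β γ) (hf : FrobeniusFixes p α β γ)
    (hw : w ^ 2 + w + 1 = 0) (hk : p ^ 2 = 3 * k + 1) : resolvent w α β γ ^ (3 * k) = 1 := by
  refine h.resolvent_pow_of_pow_char_sq hw hk ?_
  simp only [sq p, pow_mul, hf.1, hf.2.1, hf.2.2, one_mul]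

lemma FrobeniusCycles.resolvent_pow (h : IsRootTriple α β γ) (hc : FrobeniusCycles p α β γ)
    (hw : w ^ 2 + w + 1 = 0) (hk : p ^ 2 = 3 * k + 1) : resolvent w α β γ ^ (3 * k) = w := by
  refine h.resolvent_pow_of_pow_char_sq hw hk ?_
  simp only [sq p, pow_mul, hc.1, hc.2.1, hc.2.2, resolvent]
  linear_combination -(w - 1) * γ * hw

lemma frobeniusFixes_iff_resolvent_pow (h : IsRootTriple α β γ) (h2 : (2 : K) ≠ 0)
    (h23 : (23 : K) ≠ 0) (hw : w ^ 2 + w + 1 = 0) (hk : p ^ 2 = 3 * k + 1)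
    (hδ : delta α β γ ^ p = delta α β γ) :
    FrobeniusFixes p α β γ ↔
      resolvent (w ^ 2) α β γ ^ (3 * k) = resolvent w α β γ ^ (3 * k) := by
  have hw2 := EisensteinInt.sq_root hw
  have hne : w ^ 2 ≠ w := fun he ↦ three_ne_zero_of_charP (R := K) hk <| by
    linear_combination 4 * hw - (2 * w + 1) * (hw - he)
  refine ⟨fun hf ↦ by rw [hf.resolvent_pow h hw2 hk, hf.resolvent_pow h hw hk], fun heq ↦ ?_⟩
  rcases h.frobeniusFixes_or_frobeniusCycles h2 h23 hδ with hf | hc | hc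
  · exact hf
  · rw [hc.resolvent_pow h hw hk, hc.resolvent_pow h hw2 hk] at heq
    exact absurd heq hne
  · rw [← resolvent_swap hw, ← resolvent_sq_swap (β := β) hw, hc.resolvent_pow h.swap hw hk,
      hc.resolvent_pow h.swap hw2 hk] at heq
    exact absurd heq.symm hne

end CharP

section Bridge

variable {K : Type*} [Field K] {w α β γ : K} {u v : ℤ}

lemma mul_eval_resolventInt (h : IsRootTriple α β γ) (h2 : (2 : K) ≠ 0) (hw : w ^ 2 + w + 1 = 0)
    (huv : ((2 * u + v : ℤ) : K) = delta α β γ * v) :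
    3 * (1 + 2 * w) * EisensteinInt.eval hw (EisensteinInt.resolventInt u v) =
      -(2 * u + 3 * v) * resolvent w α β γ ^ 3 := by
  refine mul_left_cancel₀ h2 ?_
  have hR := h.two_mul_resolvent_pow_three hw
  have hδ := h.delta_sq
  push_cast at huv
  rw [EisensteinInt.eval_apply, EisensteinInt.resolventInt]
  push_cast
  generalize resolvent w α β γ = r at *
  generalize delta α β γ = d at *
  have hu : 2 * (u : K) = d * v - v := by linear_combination huv
  linear_combination (2 * u + 3 * v : K) * hR +
    3 * ((1 + 2 * w) * (5 + 6 * w) + (9 - (1 + 2 * w) * d)) * hu + 36 * v * (d + 2) * hw -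
    3 * v * (1 + 2 * w) * hδ

lemma mul_eval_star_resolventInt (h : IsRootTriple α β γ) (h2 : (2 : K) ≠ 0)
    (hw : w ^ 2 + w + 1 = 0) (huv : ((2 * u + v : ℤ) : K) = delta α β γ * v) :
    3 * (1 + 2 * w) * EisensteinInt.eval hw (star (EisensteinInt.resolventInt u v)) =
      (2 * u + 3 * v) * resolvent (w ^ 2) α β γ ^ 3 := by
  rw [EisensteinInt.eval_star]
  linear_combination -h.mul_eval_resolventInt h2 (EisensteinInt.sq_root hw) huv +
    6 * EisensteinInt.eval (EisensteinInt.sq_root hw) (EisensteinInt.resolventInt u v) * hw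

lemma two_mul_add_three_mul_ne_zero (h : IsRootTriple α β γ) (h3 : (3 : K) ≠ 0)
    (huv : ((2 * u + v : ℤ) : K) = delta α β γ * v) (hv : (v : K) ≠ 0) :
    (2 * u + 3 * v : K) ≠ 0 := by
  have hδ : (delta α β γ + 2) * (delta α β γ - 2) = -3 ^ 3 := by linear_combination h.delta_sq
  have hfac : (2 * u + 3 * v : K) = (delta α β γ + 2) * v := by
    push_cast at huv; linear_combination huv
  rw [hfac]
  exact mul_ne_zero (left_ne_zero_of_mul (hδ ▸ neg_ne_zero.2 (pow_ne_zero 3 h3))) hv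

lemma eval_star_resolventInt_pow_eq_iff (h : IsRootTriple α β γ) (h2 : (2 : K) ≠ 0)
    (h3 : (3 : K) ≠ 0) (hw : w ^ 2 + w + 1 = 0)
    (huv : ((2 * u + v : ℤ) : K) = delta α β γ * v) (hv : (v : K) ≠ 0) {k : ℕ} (hk : Even k) :
    EisensteinInt.eval hw (star (EisensteinInt.resolventInt u v)) ^ k =
        EisensteinInt.eval hw (EisensteinInt.resolventInt u v) ^ k ↔
      resolvent (w ^ 2) α β γ ^ (3 * k) = resolvent w α β γ ^ (3 * k) := by
  have hs : 3 * (1 + 2 * w) ≠ 0 := mul_ne_zero h3 fun h0 ↦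
    h3 (by linear_combination 4 * hw - (1 + 2 * w) * h0)
  have hW := h.two_mul_add_three_mul_ne_zero h3 huv hv
  rw [← mul_right_inj' (pow_ne_zero k hs), ← mul_pow, ← mul_pow,
    h.mul_eval_star_resolventInt h2 hw huv, h.mul_eval_resolventInt h2 hw huv, neg_mul,
    hk.neg_pow, mul_pow, mul_pow, mul_right_inj' (pow_ne_zero k hW), ← pow_mul, ← pow_mul]

lemma frobeniusFixes_iff_natCast_dvd (h : IsRootTriple α β γ) {p k : ℕ} [hp : Fact p.Prime]
    [CharP K p] (hp2 : p ≠ 2) (h23 : (23 : K) ≠ 0) (hw : w ^ 2 + w + 1 = 0)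
    (hk : p ^ 2 = 3 * k + 1) (hδ : delta α β γ ^ p = delta α β γ)
    (huv : ((2 * u + v : ℤ) : K) = delta α β γ * v) (hv : (v : K) ≠ 0) :
    FrobeniusFixes p α β γ ↔ (p : EisensteinInt) ∣
      star (EisensteinInt.resolventInt u v) ^ k - EisensteinInt.resolventInt u v ^ k := by
  have h2 : (2 : K) ≠ 0 := CharP.cast_ne_zero_of_ne_of_prime K Nat.prime_two hp2
  have h3 : (3 : K) ≠ 0 := three_ne_zero_of_charP hk
  rw [h.frobeniusFixes_iff_resolvent_pow h2 h23 hw hk hδ,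
    ← h.eval_star_resolventInt_pow_eq_iff h2 h3 hw huv hv (even_of_prime_sq_eq hp.out hp2 hk),
    EisensteinInt.natCast_dvd_star_pow_sub_pow_iff h3 hw]

end Bridge

section Frobenius

variable {K : Type*} [Field K] {p : ℕ} [hp : Fact p.Prime] [CharP K p] {α β γ : K} {u v : ℤ}

lemma exists_dvd_sq_add (h : IsRootTriple α β γ) (hδ : delta α β γ ^ p = delta α β γ) :
    ∃ d : ℤ, (p : ℤ) ∣ d ^ 2 + 23 := by
  obtain ⟨d, hd⟩ := pow_char_eq_self_iff.1 hδ
  refine ⟨d, (CharP.intCast_eq_zero_iff K p _).1 ?_⟩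
  push_cast
  linear_combination (d + delta α β γ) * hd + h.delta_sq

lemma delta_pow_char_of_eq (huv : ((2 * u + v : ℤ) : K) = delta α β γ * v) (hv : (v : K) ≠ 0) :
    delta α β γ ^ p = delta α β γ := by
  rw [← Subfield.mem_bot_iff_pow_eq_self, ← mul_div_cancel_right₀ (delta α β γ) hv, ← huv]
  exact div_mem (intCast_mem _ _) (intCast_mem _ _)

lemma exists_eq_delta_mul (h : IsRootTriple α β γ) (hp2 : p ≠ 2) {m : ℕ} (hm : Squarefree m)
    (hpm : p ∣ m) (hf : u ^ 2 + u * v + 6 * v ^ 2 = m) :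
    ∃ u' v' : ℤ, u' ^ 2 + u' * v' + 6 * v' ^ 2 = m ∧ (v' : K) ≠ 0 ∧
      ((2 * u' + v' : ℤ) : K) = delta α β γ * v' := by
  have h2 : (2 : K) ≠ 0 := CharP.cast_ne_zero_of_ne_of_prime K Nat.prime_two hp2
  have hsq : ((2 * u + v : ℤ) : K) ^ 2 = (delta α β γ * v) ^ 2 := by
    have hm0 : (m : K) = 0 := (CharP.cast_eq_zero_iff K p m).2 hpm
    have hfK := congrArg (Int.cast : ℤ → K) hf
    push_cast [hm0] at hfK ⊢
    linear_combination 4 * hfK - v ^ 2 * h.delta_sq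
  have hv : (v : K) ≠ 0 := by
    intro hv
    have hu : (u : K) = 0 := by simpa [hv, h2] using hsq
    rw [CharP.intCast_eq_zero_iff K p] at hu hv
    exact (Nat.prime_iff_prime_int.1 hp.out).not_isUnit
      ((EisensteinInt.isCoprime_of_squarefree hm hf).isUnit_of_dvd' hu hv)
  rcases sq_eq_sq_iff_eq_or_eq_neg.1 hsq with heq | heq
  · exact ⟨u, v, hf, hv, heq⟩
  · refine ⟨u + v, -v, by rw [← hf]; ring, by rwa [Int.cast_neg, neg_ne_zero], ?_⟩
    push_cast at heq ⊢
    linear_combination heq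

end Frobenius

end IsRootTriple

open IsRootTriple in
lemma frobeniusFixes_iff_exists_eq {K : Type*} [Field K] [IsAlgClosed K] {p : ℕ} [Fact p.Prime]
    [CharP K p] (hp2 : p ≠ 2) (hp3 : p ≠ 3) (h23 : (23 : K) ≠ 0) {α β γ : K}
    (h : IsRootTriple α β γ) :
    FrobeniusFixes p α β γ ↔ ∃ u v : ℤ, u ^ 2 + u * v + 6 * v ^ 2 = p := by
  have hp : p.Prime := Fact.out
  obtain ⟨w, hw⟩ := exists_sq_add_self_add_one_eq_zero K
  obtain ⟨k, hk⟩ := exists_sq_eq_three_mul_add_one fun h3 ↦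
    hp3 ((Nat.prime_dvd_prime_iff_eq Nat.prime_three hp).1 h3).symm
  constructor
  · intro hfix
    have hδ := hfix.delta_pow_char
    obtain ⟨d, hd⟩ := h.exists_dvd_sq_add hδ
    obtain ⟨u, v, hf | hf⟩ := exists_eq_or_eq_two_mul_of_dvd_sq_add (hp.odd_of_ne_two hp2) hd
    · exact ⟨u, v, hf⟩
    · obtain ⟨u', v', hf', hv, huv⟩ :=
        h.exists_eq_delta_mul hp2 (squarefree_two_mul_prime hp hp2) (dvd_mul_left p 2) hf
      exact absurd ((h.frobeniusFixes_iff_natCast_dvd hp2 h23 hw hk hδ huv hv).1 hfix)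
        (EisensteinInt.not_natCast_dvd_of_eq_two_mul_prime hp hp2 hk hf')
  · rintro ⟨u, v, hf⟩
    obtain ⟨u', v', hf', hv, huv⟩ := h.exists_eq_delta_mul hp2 hp.squarefree dvd_rfl hf
    exact (h.frobeniusFixes_iff_natCast_dvd hp2 h23 hw hk (delta_pow_char_of_eq huv hv) huv hv).2
      (EisensteinInt.natCast_dvd_of_eq_prime hp hk hf')

lemma IsPadovan.natCast_dvd_iff_exists_eq {B : ℕ → ℤ} (hB : IsPadovan B) {p : ℕ} (hp : p.Prime)
    (hp2 : p ≠ 2) (hp3 : p ≠ 3) (hp23 : p ≠ 23) :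
    (p : ℤ) ∣ B (p - 1) ↔ ∃ u v : ℤ, u ^ 2 + u * v + 6 * v ^ 2 = p := by
  have : Fact p.Prime := ⟨hp⟩
  obtain ⟨α, β, γ, h⟩ := exists_isRootTriple (AlgebraicClosure (ZMod p))
  have h23 : (23 : AlgebraicClosure (ZMod p)) ≠ 0 :=
    CharP.cast_ne_zero_of_ne_of_prime _ (by norm_num : Nat.Prime 23) hp23
  rw [h.natCast_dvd_iff_frobeniusFixes h23 hB, frobeniusFixes_iff_exists_eq hp2 hp3 h23 h]

lemma IsPadovan.apply_twenty_two {B : ℕ → ℤ} (hB : IsPadovan B) : B 22 = 265 := by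
  norm_num [hB.add_three, hB.zero, hB.one, hB.two]

lemma ne_zero_of_prime_eq_sq_add {p : ℕ} (hp : p.Prime) (hp23 : p ≠ 23) {X Y : ℤ}
    (h : (p : ℤ) = X ^ 2 + 23 * Y ^ 2) : X ≠ 0 := by
  rintro rfl
  have h23 : 23 ∣ p := Int.natCast_dvd_natCast.1 ⟨Y ^ 2, by rw [h]; norm_num⟩
  exact hp23 ((Nat.prime_dvd_prime_iff_eq (by norm_num) hp).1 h23).symm

lemma eq_sq_of_eq_sq_add_of_le {n X Y : ℤ} (hX : X ≠ 0) (hn : n ≤ 23)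
    (h : n = X ^ 2 + 23 * Y ^ 2) : n = X ^ 2 := by
  have hY : Y = 0 := by
    by_contra hY
    have hX2 : 0 < X ^ 2 := by positivity
    have hY2 : 0 < Y ^ 2 := by positivity
    omega
  rw [h, hY]; ring

theorem padovan_divisibility (B : ℕ → ℤ)
    (h0 : B 0 = 0) (h1 : B 1 = 1) (h2 : B 2 = 1)
    (hrec : ∀ n, 3 ≤ n → B n = B (n - 2) + B (n - 3))
    (p : ℕ) (hp : p.Prime) :
    (p : ℤ) ∣ B (p - 1) ↔ ∃ X Y : ℤ, X ≠ 0 ∧ (p : ℤ) = X ^ 2 + 23 * Y ^ 2 := by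
  have hB : IsPadovan B := ⟨h0, h1, h2, fun n ↦ hrec (n + 3) (by omega)⟩
  by_cases hsmall : p = 2 ∨ p = 3 ∨ p = 23
  · refine iff_of_false ?_ ?_
    · rcases hsmall with rfl | rfl | rfl
      · simp [hB.one]
      · simp [hB.two]
      · simp [hB.apply_twenty_two]
    · rintro ⟨X, Y, hX, h⟩
      have hsq := eq_sq_of_eq_sq_add_of_le hX (by omega) h
      exact (Nat.prime_iff_prime_int.1 hp).not_isSquare ⟨X, by rw [hsq, sq]⟩
  · push Not at hsmall
    obtain ⟨hp2, hp3, hp23⟩ := hsmall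
    have hodd : Odd (p : ℤ) := by exact_mod_cast hp.odd_of_ne_two hp2
    rw [hB.natCast_dvd_iff_exists_eq hp hp2 hp3 hp23, ← exists_sq_add_eq_iff hodd]
    exact exists₂_congr fun X Y ↦
      (and_iff_right_of_imp (ne_zero_of_prime_eq_sq_add hp hp23)).symm
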